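/- Let q = r^2 with r an odd prime power. Suppose q − 1 = e_1 f_1 = e_2 f_2, there exists an integer l ≥ 2 with e_1 ≡ 2^l (mod 2^{l+1}) and 2^l | e_2, and that 2e_2 | e_1(r+1) and e_1 | e_2(r−1). Let s, t be integers with 1 ≤ s ≤ D_1 and 1 ≤ t ≤ D_2, and set n_1 = s·f_1 + t·f_2. If the integer t·e_1(r+1)/(2e_2) + t(r+1)/2 is even, 4 | (t−1)(r+1), and n_1 is odd, then there exists an MDS self-dual code over F_q of length n_1 + 1, i.e., a linear code C ⊆ F_q^{n_1+1} with C = C⊥, dim C = (n_1+1)/2, and minimum Hamming distance (n_1+1)/2 + 1. -/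

import Mathlib

/-- The Euclidean dual of a linear code `C ⊆ F^n`. -/
def dualCode {F : Type*} [Field F] {n : ℕ} (C : Submodule F (Fin n → F)) :
    Submodule F (Fin n → F) where
  carrier := {x | ∀ c ∈ C, ∑ i, x i * c i = 0}
  add_mem' := by
    intro a b ha hb c hc
    simp only [Set.mem_setOf_eq] at ha hb ⊢
    simp [Pi.add_apply, add_mul, Finset.sum_add_distrib, ha c hc, hb c hc]
  zero_mem' := by intro c hc; simp
  smul_mem' := by
    intro r a ha c hc
    simp only [Set.mem_setOf_eq] at ha ⊢
    simp [Pi.smul_apply, smul_eq_mul, mul_assoc, ← Finset.mul_sum, ha c hc]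

/-- `C` has minimum Hamming distance `d`. -/
def IsMinDist {F : Type*} [Field F] [DecidableEq F] {n : ℕ}
    (C : Submodule F (Fin n → F)) (d : ℕ) : Prop :=
  (∀ c ∈ C, c ≠ 0 → d ≤ hammingNorm c) ∧ ∃ c ∈ C, c ≠ 0 ∧ hammingNorm c = d

/-! An extended generalized Reed–Solomon code on the roots of a monic split polynomial `P` of odd
degree becomes self-dual after rescaling its columns as soon as `-P'(x)` is a nonzero square at
every root `x`. Writing `g = gcd e₁ e₂`, `D₁ = e₁ / g` and `D₂ = e₂ / g`, take
`P = ∏ (X ^ f₁ - β) * ∏ (X ^ f₂ - γ)`, where `β` runs over `s` of the `D₁`-th roots of `1` and `γ`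
over `t` of the `D₂`-th roots of `-1`. The roots of the two factors satisfy
`x ^ ((q - 1) / g) = 1` and `= -1` respectively, so they are distinct, and they are squares because
`4 ∣ g`; the same holds for `-1`. At a root, `P'` is therefore, up to squares, a product of
differences of elements of `F_r`, all of which are squares in `F_q`, and of differences of
`(r + 1)`-th roots of unity `μ`, whose quadratic character is a sign read off from `(r + 1) / 2`
and the values `μ ^ ((r + 1) / 2)`. The parity hypotheses make these signs cancel. -/

open Polynomial Finset

section Dual

variable {F : Type*} [Field F] {n : ℕ}

/-- `C` is an MDS self-dual code: by the Singleton bound, `n / 2 + 1` is the largest minimum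
distance of a code of length `n` and dimension `n / 2`. -/
def IsMDSSelfDual [DecidableEq F] (C : Submodule F (Fin n → F)) : Prop :=
  dualCode C = C ∧ Module.finrank F C = n / 2 ∧ IsMinDist C (n / 2 + 1)

lemma dualCode_eq_orthogonal (C : Submodule F (Fin n → F)) :
    dualCode C = LinearMap.BilinForm.orthogonal (dotProductBilin F F) C := by
  ext x
  rw [LinearMap.BilinForm.mem_orthogonal_iff]
  refine forall₂_congr fun c _ => ?_
  change x ⬝ᵥ c = 0 ↔ c ⬝ᵥ x = 0
  rw [dotProduct_comm]

lemma nondegenerate_dotProductBilin :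
    (dotProductBilin F F : LinearMap.BilinForm F (Fin n → F)).Nondegenerate :=
  ⟨fun x hx => dotProduct_eq_zero x hx,
    fun x hx => dotProduct_eq_zero x fun y => (dotProduct_comm x y).trans (hx y)⟩

lemma finrank_dualCode (C : Submodule F (Fin n → F)) :
    Module.finrank F (dualCode C) = n - Module.finrank F C := by
  rw [dualCode_eq_orthogonal,
    LinearMap.BilinForm.finrank_orthogonal nondegenerate_dotProductBilin, Module.finrank_fin_fun]

lemma dualCode_eq_self {C : Submodule F (Fin n → F)} (hle : C ≤ dualCode C)
    (hdim : 2 * Module.finrank F C = n) : dualCode C = C :=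
  (Submodule.eq_of_le_of_finrank_eq hle (by rw [finrank_dualCode]; omega)).symm

end Dual

section ExtendedGRS

variable {F : Type*} [Field F] {n : ℕ}

/-- The encoder `f ↦ (v₀ f(a₀), …, vₙ₋₁ f(aₙ₋₁), fₖ)` of the extended generalized Reed–Solomon
code with evaluation points `a` and column multipliers `v`; the last coordinate, the coefficient
of `X ^ k`, plays the role of the value at infinity of a polynomial of degree at most `k`. -/
noncomputable def extGRSEncode (a v : Fin n → F) (k : ℕ) : F[X] →ₗ[F] Fin (n + 1) → F :=
  LinearMap.pi (Fin.snoc (α := fun _ => F[X] →ₗ[F] F) (fun i => v i • leval (a i)) (lcoeff F k))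

/-- The extended generalized Reed–Solomon code `GRS_{k+1}(a, v, ∞)` of length `n + 1`. It is
indexed by the largest degree `k` of a message, so that its dimension is `k + 1`. -/
noncomputable def extGRS (a v : Fin n → F) (k : ℕ) : Submodule F (Fin (n + 1) → F) :=
  (degreeLT F (k + 1)).map (extGRSEncode a v k)

@[simp]
lemma extGRSEncode_castSucc (a v : Fin n → F) (k : ℕ) (f : F[X]) (i : Fin n) :
    extGRSEncode a v k f i.castSucc = v i * f.eval (a i) := by
  simp [extGRSEncode]

@[simp]
lemma extGRSEncode_last (a v : Fin n → F) (k : ℕ) (f : F[X]) :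
    extGRSEncode a v k f (Fin.last n) = f.coeff k := by
  simp [extGRSEncode]

lemma mem_degreeLT_succ_iff {k : ℕ} {f : F[X]} : f ∈ degreeLT F (k + 1) ↔ f.natDegree ≤ k := by
  rw [mem_degreeLT, degree_lt_iff_coeff_zero, natDegree_le_iff_coeff_eq_zero]
  rfl

section MinimumDistance

variable [DecidableEq F] {a v : Fin n → F} {k : ℕ}

lemma card_eval_eq_zero_le_natDegree (ha : Function.Injective a) {f : F[X]} (hf : f ≠ 0) :
    #{i | f.eval (a i) = 0} ≤ f.natDegree := by
  rw [← card_image_of_injective _ ha]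
  refine card_le_degree_of_subset_roots fun x hx => (mem_roots hf).2 ?_
  obtain ⟨i, hi, rfl⟩ := mem_image.1 (Finset.mem_def.2 hx)
  exact (mem_filter.1 hi).2

lemma hammingNorm_extGRSEncode (hv : ∀ i, v i ≠ 0) (f : F[X]) :
    hammingNorm (extGRSEncode a v k f) =
      #{i | f.eval (a i) ≠ 0} + if f.coeff k ≠ 0 then 1 else 0 := by
  simp [hammingNorm, card_filter, Fin.sum_univ_castSucc, hv]

lemma le_hammingNorm_extGRSEncode (ha : Function.Injective a) (hv : ∀ i, v i ≠ 0) {f : F[X]}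
    (hk : k ≤ n) (hf : f ≠ 0) (hdeg : f.natDegree ≤ k) :
    n - k + 1 ≤ hammingNorm (extGRSEncode a v k f) := by
  have hzeros := card_eval_eq_zero_le_natDegree ha hf
  have hsplit : #{i | f.eval (a i) = 0} + #{i | f.eval (a i) ≠ 0} = n := by
    rw [card_filter_add_card_filter_not, card_univ, Fintype.card_fin]
  rw [hammingNorm_extGRSEncode hv]
  split_ifs with hcoeff
  · omega
  · have : f.natDegree ≠ k := fun h => hcoeff (h ▸ leadingCoeff_ne_zero.2 hf)
    omega

omit [DecidableEq F] in
lemma extGRSEncode_ne_zero (ha : Function.Injective a) (hv : ∀ i, v i ≠ 0) {f : F[X]}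
    (hk : k ≤ n) (hf : f ≠ 0) (hdeg : f.natDegree ≤ k) : extGRSEncode a v k f ≠ 0 := by
  classical
  exact hammingNorm_pos_iff.1
    ((Nat.succ_pos _).trans_le (le_hammingNorm_extGRSEncode ha hv hk hf hdeg))

omit [DecidableEq F] in
lemma finrank_extGRS (ha : Function.Injective a) (hv : ∀ i, v i ≠ 0) (hk : k ≤ n) :
    Module.finrank F (extGRS a v k) = k + 1 := by
  have hinj : Function.Injective ((extGRSEncode a v k).domRestrict (degreeLT F (k + 1))) := by
    refine (injective_iff_map_eq_zero _).2 fun f hf => ?_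
    by_contra hne
    exact extGRSEncode_ne_zero ha hv hk (Subtype.coe_ne_coe.2 hne) (mem_degreeLT_succ_iff.1 f.2) hf
  rw [extGRS, ← LinearMap.range_domRestrict, LinearMap.finrank_range_of_inj hinj,
    (degreeLTEquiv F (k + 1)).finrank_eq, Module.finrank_fin_fun]

lemma isMinDist_extGRS (ha : Function.Injective a) (hv : ∀ i, v i ≠ 0) (hk : k ≤ n) :
    IsMinDist (extGRS a v k) (n - k + 1) := by
  refine ⟨?_, ?_⟩
  · rintro _ ⟨f, hf, rfl⟩ hne
    refine le_hammingNorm_extGRSEncode ha hv hk ?_ (mem_degreeLT_succ_iff.1 hf)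
    rintro rfl
    exact hne (map_zero _)
  · obtain ⟨T, -, hT⟩ := exists_subset_card_eq (s := (univ : Finset (Fin n))) (n := k) (by simpa)
    set f : F[X] := Lagrange.nodal T a
    have hdeg : f.natDegree = k := Lagrange.natDegree_nodal.trans hT
    have hf : f ≠ 0 := Lagrange.nodal_ne_zero
    refine ⟨_, ⟨f, mem_degreeLT_succ_iff.2 hdeg.le, rfl⟩,
      extGRSEncode_ne_zero ha hv hk hf hdeg.le, ?_⟩
    have hcoeff : f.coeff k ≠ 0 := hdeg ▸ leadingCoeff_ne_zero.2 hf
    have hnonzeros : ({i | f.eval (a i) ≠ 0} : Finset (Fin n)) = Tᶜ := by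
      ext i
      simp [f, Lagrange.eval_nodal, prod_eq_zero_iff, sub_eq_zero, ha.eq_iff]
    rw [hammingNorm_extGRSEncode hv, if_pos hcoeff, hnonzeros, card_compl, hT, Fintype.card_fin]

end MinimumDistance

/- For `deg f, deg g ≤ m`, Lagrange interpolation expresses the leading coefficient `fₘ gₘ` of
`f g` through its values at the `2 m + 1` points. -/
lemma extGRS_le_dualCode {m : ℕ} {a v : Fin (2 * m + 1) → F} (ha : Function.Injective a)
    (hv : ∀ i, v i * v i = -Lagrange.nodalWeight univ a i) :
    extGRS a v m ≤ dualCode (extGRS a v m) := by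
  rintro _ ⟨f, hf, rfl⟩ _ ⟨g, hg, rfl⟩
  have hf := mem_degreeLT_succ_iff.1 hf
  have hg := mem_degreeLT_succ_iff.1 hg
  have hdeg : (f * g).degree < #(univ : Finset (Fin (2 * m + 1))) := by
    have hlt : (f * g).natDegree < 2 * m + 1 := by
      have hmul := natDegree_mul_le (p := f) (q := g)
      omega
    rw [card_univ, Fintype.card_fin]
    exact degree_le_natDegree.trans_lt (Nat.cast_lt.2 hlt)
  have hcoeff : f.coeff m * g.coeff m =
      ∑ i, (f * g).eval (a i) * Lagrange.nodalWeight univ a i := by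
    have htop : #(univ : Finset (Fin (2 * m + 1))) - 1 = m + m := by simp [two_mul]
    rw [← coeff_mul_add_eq_of_natDegree_le hf hg, ← htop, Lagrange.coeff_eq_sum ha.injOn hdeg]
    simp only [Lagrange.nodalWeight, prod_inv_distrib, div_eq_mul_inv]
  rw [Fin.sum_univ_castSucc, extGRSEncode_last, extGRSEncode_last, hcoeff, ← sum_add_distrib]
  refine sum_eq_zero fun i _ => ?_
  rw [extGRSEncode_castSucc, extGRSEncode_castSucc, eval_mul]
  linear_combination f.eval (a i) * g.eval (a i) * hv i

theorem exists_isMDSSelfDual_of_isSquare_neg_nodalWeight [DecidableEq F] (hn : Odd n)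
    {a : Fin n → F} (ha : Function.Injective a)
    (hsq : ∀ i, IsSquare (-Lagrange.nodalWeight univ a i)) :
    ∃ C : Submodule F (Fin (n + 1) → F), IsMDSSelfDual C := by
  obtain ⟨m, rfl⟩ := hn
  choose v hv using hsq
  have hv0 (i) : v i ≠ 0 := by
    intro h
    have hi := hv i
    rw [h, zero_mul, neg_eq_zero] at hi
    exact Lagrange.nodalWeight_ne_zero ha.injOn (mem_univ i) hi
  have hhalf : (2 * m + 1 + 1) / 2 = m + 1 := by omega
  have hdim := finrank_extGRS (k := m) ha hv0 (by omega)
  have hdist := isMinDist_extGRS (k := m) ha hv0 (by omega)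
  refine ⟨extGRS a v m, dualCode_eq_self (extGRS_le_dualCode ha fun i => (hv i).symm) ?_, ?_, ?_⟩
  · omega
  · rw [hhalf, hdim]
  · rw [hhalf]
    convert hdist using 1
    omega

lemma exists_injective_nodal_eq {P : F[X]} (hP : P.Monic) (hsplits : P.Splits)
    (hderiv : ∀ x, P.IsRoot x → P.derivative.eval x ≠ 0) :
    ∃ a : Fin P.natDegree → F, Function.Injective a ∧ Lagrange.nodal univ a = P := by
  classical
  have hnodup : P.roots.Nodup := by
    refine Multiset.nodup_iff_count_le_one.2 fun x => ?_
    rw [count_roots]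
    by_contra! hmult
    obtain ⟨hroot, hroot'⟩ := (one_lt_rootMultiplicity_iff_isRoot hP.ne_zero).1 hmult
    exact hderiv x hroot hroot'
  have hcard : #P.roots.toFinset = P.natDegree := by
    rw [Multiset.toFinset_card_of_nodup hnodup, hsplits.natDegree_eq_card_roots]
  let e := (P.roots.toFinset.equivFinOfCardEq hcard).symm
  refine ⟨fun i => e i, Subtype.val_injective.comp e.injective, ?_⟩
  calc Lagrange.nodal univ (fun i => (e i : F))
      = ∏ x : P.roots.toFinset, (X - C (x : F)) := Fintype.prod_equiv e _ _ fun _ => rfl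
    _ = ∏ x ∈ P.roots.toFinset, (X - C x) := prod_coe_sort P.roots.toFinset fun x => X - C x
    _ = (P.roots.map fun x => X - C x).prod := by
        rw [Finset.prod, Multiset.toFinset_val, hnodup.dedup]
    _ = P := (hsplits.eq_prod_roots_of_monic hP).symm

theorem exists_isMDSSelfDual_of_isSquare_neg_derivative [DecidableEq F] {P : F[X]}
    (hP : P.Monic) (hsplits : P.Splits) (hodd : Odd P.natDegree)
    (hderiv : ∀ x, P.IsRoot x → P.derivative.eval x ≠ 0)
    (hsq : ∀ x, P.IsRoot x → IsSquare (-P.derivative.eval x)) :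
    ∃ C : Submodule F (Fin (P.natDegree + 1) → F), IsMDSSelfDual C := by
  obtain ⟨a, ha, hnodal⟩ := exists_injective_nodal_eq hP hsplits hderiv
  refine exists_isMDSSelfDual_of_isSquare_neg_nodalWeight hodd ha fun i => ?_
  rw [Lagrange.nodalWeight_eq_eval_derivative_nodal (mem_univ i), ← inv_neg, isSquare_inv, hnodal]
  refine hsq _ ?_
  rw [← hnodal]
  exact Lagrange.eval_nodal_at_node (mem_univ i)

theorem exists_isMDSSelfDual_of_quadraticChar_derivative_eq_one [Fintype F] [DecidableEq F]
    {P : F[X]} (hP : P.Monic) (hsplits : P.Splits) (hodd : Odd P.natDegree)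
    (hneg : quadraticChar F (-1) = 1)
    (hderiv : ∀ x, P.IsRoot x → quadraticChar F (P.derivative.eval x) = 1) :
    ∃ C : Submodule F (Fin (P.natDegree + 1) → F), IsMDSSelfDual C := by
  have hne (x : F) (hx : P.IsRoot x) : P.derivative.eval x ≠ 0 := fun h => by
    simpa [h] using hderiv x hx
  refine exists_isMDSSelfDual_of_isSquare_neg_derivative hP hsplits hodd hne fun x hx => ?_
  rw [← quadraticChar_one_iff_isSquare (neg_ne_zero.2 (hne x hx)), ← neg_one_mul, map_mul, hneg,
    hderiv x hx, one_mul]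

end ExtendedGRS

section FiberPoly

variable {F : Type*} [Field F] {f : ℕ} {B : Finset F} {x : F}

/-- The monic polynomial `∏ c ∈ B, (X ^ f - c)`, whose roots are the `x` with `x ^ f ∈ B`.
Writing it as an expansion gives its degree and derivative from those of a nodal polynomial. -/
noncomputable def fiberPoly (f : ℕ) (B : Finset F) : F[X] :=
  expand F f (Lagrange.nodal B id)

lemma monic_fiberPoly (hf : 0 < f) : (fiberPoly f B).Monic :=
  Lagrange.nodal_monic.expand hf

lemma natDegree_fiberPoly : (fiberPoly f B).natDegree = #B * f := by
  rw [fiberPoly, natDegree_expand, Lagrange.natDegree_nodal]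

lemma eval_fiberPoly : (fiberPoly f B).eval x = ∏ c ∈ B, (x ^ f - c) := by
  rw [fiberPoly, expand_eval, Lagrange.eval_nodal]
  rfl

lemma isRoot_fiberPoly : (fiberPoly f B).IsRoot x ↔ x ^ f ∈ B := by
  simp [IsRoot, eval_fiberPoly, prod_eq_zero_iff, sub_eq_zero]

lemma eval_derivative_fiberPoly [DecidableEq F] (hx : x ^ f ∈ B) :
    (fiberPoly f B).derivative.eval x =
      (∏ c ∈ B.erase (x ^ f), (x ^ f - c)) * (f * x ^ (f - 1)) := by
  rw [fiberPoly, derivative_expand, eval_mul, expand_eval,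
    ← id_eq (x ^ f), Lagrange.eval_nodal_derivative_eval_node_eq hx, Lagrange.eval_nodal]
  simp

end FiberPoly

section FiniteField

variable {F : Type*} [Field F] [Fintype F] {e f : ℕ}

lemma splits_X_pow_sub_C_of_card_eq (hcard : Fintype.card F = f * e + 1) {c : F} (hc : c ^ e = 1) :
    (X ^ f - C c : F[X]).Splits := by
  have hsplits := splits_X_pow_nat_card_sub_X (K := F)
  rw [Nat.card_eq_fintype_card] at hsplits
  refine hsplits.of_dvd (FiniteField.X_pow_card_sub_X_ne_zero F Fintype.one_lt_card) ?_
  have hdvd := sub_dvd_pow_sub_pow (X ^ f : F[X]) (C c) e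
  rw [← C_pow, hc, C_1, ← pow_mul] at hdvd
  exact hdvd.trans ⟨X, by rw [hcard]; ring⟩

lemma natCast_ne_zero_of_card_eq (hcard : Fintype.card F = f * e + 1) : (f : F) ≠ 0 := by
  intro hf
  have hzero := Nat.cast_card_eq_zero (R := F)
  simp [hcard, hf] at hzero

lemma pos_of_card_eq (hcard : Fintype.card F = f * e + 1) : 0 < f :=
  Nat.pos_of_ne_zero fun h => natCast_ne_zero_of_card_eq hcard (by rw [h, Nat.cast_zero])

lemma splits_fiberPoly {B : Finset F} (hcard : Fintype.card F = f * e + 1)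
    (hB : ∀ c ∈ B, c ^ e = 1) : (fiberPoly f B).Splits := by
  have hprod : fiberPoly f B = ∏ c ∈ B, (X ^ f - C c) := by
    simp [fiberPoly, Lagrange.nodal_eq]
  rw [hprod]
  exact Splits.prod fun c hc => splits_X_pow_sub_C_of_card_eq hcard (hB c hc)

lemma card_nthRootsFinset_of_card_eq (hcard : Fintype.card F = f * e + 1) {c : F} (hc₀ : c ≠ 0)
    (hc : c ^ e = 1) : #(nthRootsFinset f c) = f := by
  classical
  have hnodup := nodup_roots (separable_X_pow_sub_C c (natCast_ne_zero_of_card_eq hcard) hc₀)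
  rw [nthRootsFinset_def, nthRoots, Multiset.toFinset_card_of_nodup hnodup,
    ← (splits_X_pow_sub_C_of_card_eq hcard hc).natDegree_eq_card_roots, natDegree_X_pow_sub_C]

lemma exists_finset_card_eq_forall_pow_eq (hcard : Fintype.card F = f * e + 1) {c : F}
    (hc₀ : c ≠ 0) (hc : c ^ e = 1) {s : ℕ} (hs : s ≤ f) :
    ∃ B : Finset F, #B = s ∧ ∀ b ∈ B, b ^ f = c := by
  obtain ⟨B, hB, hBs⟩ :=
    exists_subset_card_eq (hs.trans_eq (card_nthRootsFinset_of_card_eq hcard hc₀ hc).symm)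
  exact ⟨B, hBs, fun b hb => (mem_nthRootsFinset (pos_of_card_eq hcard) c).1 (hB hb)⟩

lemma exists_ringHom_eq_pow_of_dvd_card {r : ℕ} (hr : r ∣ Fintype.card F) :
    ∃ φ : F →+* F, ∀ x, φ x = x ^ r := by
  obtain ⟨p, _⟩ := CharP.exists F
  obtain ⟨n, hp, hcard⟩ := FiniteField.card F p
  have : Fact p.Prime := ⟨hp⟩
  obtain ⟨m, -, rfl⟩ := (Nat.dvd_prime_pow hp).1 (hcard ▸ hr)
  exact ⟨iterateFrobenius F p m, iterateFrobenius_def p m⟩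

lemma sub_pow_of_dvd_card {r : ℕ} (hr : r ∣ Fintype.card F) (x y : F) :
    (x - y) ^ r = x ^ r - y ^ r := by
  obtain ⟨φ, hφ⟩ := exists_ringHom_eq_pow_of_dvd_card hr
  simp only [← hφ, map_sub]

lemma natCast_pow_of_dvd_card {r : ℕ} (hr : r ∣ Fintype.card F) (n : ℕ) : (n : F) ^ r = n := by
  obtain ⟨φ, hφ⟩ := exists_ringHom_eq_pow_of_dvd_card hr
  rw [← hφ, map_natCast]

lemma ringChar_ne_two_of_odd_card (hodd : Odd (Fintype.card F)) : ringChar F ≠ 2 := fun h =>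
  Nat.not_even_iff_odd.2 hodd (Nat.even_iff.2 (FiniteField.even_card_iff_char_two.1 h))

lemma neg_one_ne_one_of_odd_card (hodd : Odd (Fintype.card F)) : (-1 : F) ≠ 1 :=
  Ring.neg_one_ne_one_of_char_ne_two (ringChar_ne_two_of_odd_card hodd)

end FiniteField

lemma sq_eq_two_mul_add_one {r h : ℕ} (hr : r + 1 = 2 * h) : r ^ 2 = 2 * ((r - 1) * h) + 1 := by
  obtain ⟨h, rfl⟩ : ∃ h', h = h' + 1 := ⟨h - 1, by omega⟩
  obtain rfl : r = 2 * h + 1 := by omega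
  rw [Nat.add_sub_cancel]
  ring

section QuadraticChar

variable {F : Type*} [Field F] [Fintype F] [DecidableEq F]

lemma quadraticChar_eq_neg_one_pow (hodd : Odd (Fintype.card F)) {z : F} {k : ℕ}
    (hz : z ^ (Fintype.card F / 2) = (-1) ^ k) : quadraticChar F z = (-1) ^ k := by
  have hchar := ringChar_ne_two_of_odd_card hodd
  refine Int.cast_injOn_of_ringChar_ne_two hchar (quadraticChar_isQuadratic F z) ?_ ?_
  · rcases neg_one_pow_eq_or ℤ k with h | h <;> simp [h]
  · rw [quadraticChar_eq_pow_of_char_ne_two' hchar, hz]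
    push_cast
    rfl

lemma quadraticChar_eq_one_of_pow_sq_eq_one {M g : ℕ} (hcard : Fintype.card F = M * g + 1)
    (hg : 4 ∣ g) {x : F} (hx : (x ^ M) ^ 2 = 1) : quadraticChar F x = 1 := by
  obtain ⟨g, rfl⟩ := hg
  have hhalf : Fintype.card F = 2 * (M * 2 * g) + 1 := by rw [hcard]; ring
  refine quadraticChar_eq_neg_one_pow (k := 0) ⟨_, hhalf⟩ ?_
  rw [show Fintype.card F / 2 = M * 2 * g by omega, pow_mul, pow_mul, hx, one_pow, pow_zero]

section SquareOrder

variable {r h : ℕ} (hF : Fintype.card F = r ^ 2) (hr : r + 1 = 2 * h)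
include hF hr

lemma quadraticChar_eq_one_of_pow_eq_self {z : F} (hz : z ≠ 0) (hzr : z ^ r = z) :
    quadraticChar F z = 1 := by
  have hcard := hF.trans (sq_eq_two_mul_add_one hr)
  have hroot : z ^ (r - 1) = 1 := by
    refine mul_right_cancel₀ hz ?_
    rw [← pow_succ, Nat.sub_add_cancel (by omega), hzr, one_mul]
  refine quadraticChar_eq_neg_one_pow (k := 0) ⟨_, hcard⟩ ?_
  rw [show Fintype.card F / 2 = (r - 1) * h by omega, pow_mul, hroot, one_pow, pow_zero]

lemma quadraticChar_natCast {n : ℕ} (hn : (n : F) ≠ 0) : quadraticChar F n = 1 :=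
  quadraticChar_eq_one_of_pow_eq_self hF hr hn
    (natCast_pow_of_dvd_card (hF ▸ dvd_pow_self r two_ne_zero) n)

lemma quadraticChar_eval_derivative_fiberPoly {e f : ℕ} (hcard : Fintype.card F = f * e + 1)
    {B : Finset F} {x : F} (hx : x ^ f ∈ B) (hχ : quadraticChar F x = 1) :
    quadraticChar F ((fiberPoly f B).derivative.eval x) =
      quadraticChar F (∏ c ∈ B.erase (x ^ f), (x ^ f - c)) := by
  rw [eval_derivative_fiberPoly hx, map_mul, map_mul, map_pow, hχ, one_pow,
    quadraticChar_natCast hF hr (natCast_ne_zero_of_card_eq hcard), mul_one, mul_one]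

lemma quadraticChar_sub_of_pow_eq_self {y z : F} (hy : y ^ r = y) (hz : z ^ r = z) (hne : y ≠ z) :
    quadraticChar F (y - z) = 1 := by
  refine quadraticChar_eq_one_of_pow_eq_self hF hr (sub_ne_zero.2 hne) ?_
  rw [sub_pow_of_dvd_card (hF ▸ dvd_pow_self r two_ne_zero), hy, hz]

/- Since `μ ^ r = μ⁻¹` and `ν ^ r = ν⁻¹`, one has `(μ - ν) ^ (r - 1) = -(μ ν)⁻¹`. -/
lemma quadraticChar_sub_of_pow_eq_neg_one_pow {μ ν : F} {j k : ℕ} (hμ : μ ^ h = (-1) ^ j)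
    (hν : ν ^ h = (-1) ^ k) (hne : μ ≠ ν) :
    quadraticChar F (μ - ν) = (-1) ^ (h + j + k) := by
  have hcard := hF.trans (sq_eq_two_mul_add_one hr)
  have hμr : μ ^ r * μ = 1 := by
    rw [← pow_succ, hr, mul_comm 2, pow_mul, hμ, pow_right_comm, neg_one_sq, one_pow]
  have hνr : ν ^ r * ν = 1 := by
    rw [← pow_succ, hr, mul_comm 2, pow_mul, hν, pow_right_comm, neg_one_sq, one_pow]
  have hpow : (μ - ν) ^ (r - 1) * (μ * ν) = -1 := by
    refine mul_right_cancel₀ (sub_ne_zero.2 hne) ?_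
    calc (μ - ν) ^ (r - 1) * (μ * ν) * (μ - ν)
        = (μ - ν) ^ (r - 1 + 1) * (μ * ν) := by ring
      _ = (μ ^ r - ν ^ r) * (μ * ν) := by
          rw [Nat.sub_add_cancel (by omega),
            sub_pow_of_dvd_card (hF ▸ dvd_pow_self r two_ne_zero)]
      _ = -1 * (μ - ν) := by linear_combination ν * hμr - μ * hνr
  have hsq (i : ℕ) : (-1 : F) ^ i * (-1) ^ i = 1 := by rw [← mul_pow]; simp
  refine quadraticChar_eq_neg_one_pow ⟨_, hcard⟩ ?_
  calc (μ - ν) ^ (Fintype.card F / 2)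
      = ((μ - ν) ^ (r - 1)) ^ h := by
        rw [show Fintype.card F / 2 = (r - 1) * h by omega, pow_mul]
    _ = ((μ - ν) ^ (r - 1) * (μ * ν)) ^ h * (-1) ^ j * (-1) ^ k := by
        rw [mul_pow, mul_pow, hμ, hν]
        linear_combination (-((μ - ν) ^ (r - 1)) ^ h) * (hsq j * (-1) ^ k * (-1) ^ k + hsq k)
    _ = (-1) ^ (h + j + k) := by rw [hpow, pow_add, pow_add]

lemma quadraticChar_prod_sub_of_pow_eq_self {B : Finset F} {y : F} (hy : y ^ r = y)
    (hB : ∀ c ∈ B, c ^ r = c) (hyB : y ∉ B) : quadraticChar F (∏ c ∈ B, (y - c)) = 1 := by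
  rw [map_prod]
  exact prod_eq_one fun c hc =>
    quadraticChar_sub_of_pow_eq_self hF hr hy (hB c hc) (ne_of_mem_of_not_mem hc hyB).symm

lemma quadraticChar_prod_sub_of_pow_eq_neg_one_pow {G : Finset F} {μ : F} {j k : ℕ}
    (hμ : μ ^ h = (-1) ^ j) (hG : ∀ c ∈ G, c ^ h = (-1) ^ k) (hμG : μ ∉ G) :
    quadraticChar F (∏ c ∈ G, (μ - c)) = (-1) ^ ((h + j + k) * #G) := by
  rw [map_prod, pow_mul, ← prod_const]
  exact prod_congr rfl fun c hc =>
    quadraticChar_sub_of_pow_eq_neg_one_pow hF hr hμ (hG c hc) (ne_of_mem_of_not_mem hc hμG).symm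

end SquareOrder

end QuadraticChar

lemma pow_eq_self_of_pow_eq_one {R : Type*} [Monoid R] {z : R} {k r : ℕ} (hr : r ≠ 0)
    (hk : k ∣ r - 1) (hz : z ^ k = 1) : z ^ r = z := by
  obtain ⟨j, hj⟩ := hk
  rw [show r = k * j + 1 by omega, pow_succ, pow_mul, hz, one_pow, one_mul]

section TwoFamilies

variable {F : Type*} [Field F] [Fintype F] [DecidableEq F] {r m M g D₁ D₂ f₁ f₂ : ℕ}
  {B G : Finset F} (hF : Fintype.card F = r ^ 2) (hr : r + 1 = 2 * (D₂ * m))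
  (hcard : Fintype.card F = M * g + 1) (hg : 4 ∣ g) (hM₁ : f₁ * D₁ = M) (hM₂ : f₂ * D₂ = M)
include hF hr hcard hg hM₁ hM₂

lemma quadraticChar_eval_derivative_of_pow_left_mem (hD₁ : D₁ ∣ r - 1)
    (hB : ∀ c ∈ B, c ^ D₁ = 1) (hG : ∀ c ∈ G, c ^ D₂ = -1)
    (hpar : Even ((D₂ * m + m) * #G)) {x : F} (hx : x ^ f₁ ∈ B) :
    quadraticChar F ((fiberPoly f₁ B * fiberPoly f₂ G).derivative.eval x) = 1 := by
  have hxM : x ^ M = 1 := by rw [← hM₁, pow_mul, hB _ hx]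
  have hxD₂ : (x ^ f₂) ^ D₂ = 1 := by rw [← pow_mul, hM₂, hxM]
  have hxG : x ^ f₂ ∉ G := fun hmem =>
    neg_one_ne_one_of_odd_card ⟨_, hF.trans (sq_eq_two_mul_add_one hr)⟩
      ((hG _ hmem).symm.trans hxD₂)
  have hχx : quadraticChar F x = 1 :=
    quadraticChar_eq_one_of_pow_sq_eq_one hcard hg (by rw [hxM, one_pow])
  have hfix {c : F} (hc : c ∈ B) : c ^ r = c := pow_eq_self_of_pow_eq_one (by omega) hD₁ (hB c hc)
  have hχB : quadraticChar F ((fiberPoly f₁ B).derivative.eval x) = 1 := by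
    have hcard₁ : Fintype.card F = f₁ * (D₁ * g) + 1 := by rw [hcard, ← hM₁, mul_assoc]
    rw [quadraticChar_eval_derivative_fiberPoly hF hr hcard₁ hx hχx]
    exact quadraticChar_prod_sub_of_pow_eq_self hF hr (hfix hx)
      (fun c hc => hfix (mem_of_mem_erase hc)) (notMem_erase _ _)
  have hχG : quadraticChar F ((fiberPoly f₂ G).eval x) = 1 := by
    rw [eval_fiberPoly, quadraticChar_prod_sub_of_pow_eq_neg_one_pow hF hr (j := 0) (k := m)
      (by rw [pow_mul, hxD₂, one_pow, pow_zero]) (fun c hc => by rw [pow_mul, hG c hc]) hxG]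
    exact hpar.neg_one_pow
  rw [derivative_mul, eval_add, eval_mul, eval_mul, (isRoot_fiberPoly.2 hx).eq_zero, zero_mul,
    add_zero, map_mul, hχB, hχG, one_mul]

lemma quadraticChar_eval_derivative_of_pow_right_mem (hD₁ : 2 * D₁ ∣ r - 1)
    (hB : ∀ c ∈ B, c ^ D₁ = 1) (hG : ∀ c ∈ G, c ^ D₂ = -1)
    (hpar : Even (D₂ * m * (#G - 1))) {y : F} (hy : y ^ f₂ ∈ G) :
    quadraticChar F ((fiberPoly f₁ B * fiberPoly f₂ G).derivative.eval y) = 1 := by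
  have hyM : y ^ M = -1 := by rw [← hM₂, pow_mul, hG _ hy]
  have hyD₁ : (y ^ f₁) ^ D₁ = -1 := by rw [← pow_mul, hM₁, hyM]
  have hyB : y ^ f₁ ∉ B := fun hmem =>
    neg_one_ne_one_of_odd_card ⟨_, hF.trans (sq_eq_two_mul_add_one hr)⟩
      (hyD₁.symm.trans (hB _ hmem))
  have hχy : quadraticChar F y = 1 :=
    quadraticChar_eq_one_of_pow_sq_eq_one hcard hg (by rw [hyM, neg_one_sq])
  have hχG : quadraticChar F ((fiberPoly f₂ G).derivative.eval y) = 1 := by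
    have hcard₂ : Fintype.card F = f₂ * (D₂ * g) + 1 := by rw [hcard, ← hM₂, mul_assoc]
    have hpow {c : F} (hc : c ∈ G) : c ^ (D₂ * m) = (-1) ^ m := by rw [pow_mul, hG c hc]
    rw [quadraticChar_eval_derivative_fiberPoly hF hr hcard₂ hy hχy,
      quadraticChar_prod_sub_of_pow_eq_neg_one_pow hF hr (hpow hy)
        (fun c hc => hpow (mem_of_mem_erase hc)) (notMem_erase _ _), card_erase_of_mem hy]
    refine Even.neg_one_pow ?_
    rw [add_assoc, add_mul]
    exact hpar.add ((Even.add_self m).mul_right _)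
  have hχB : quadraticChar F ((fiberPoly f₁ B).eval y) = 1 := by
    rw [eval_fiberPoly]
    refine quadraticChar_prod_sub_of_pow_eq_self hF hr ?_ ?_ hyB
    · exact pow_eq_self_of_pow_eq_one (by omega) hD₁ (by rw [pow_mul', hyD₁, neg_one_sq])
    · exact fun c hc => pow_eq_self_of_pow_eq_one (by omega) (dvd_of_mul_left_dvd hD₁) (hB c hc)
  rw [derivative_mul, eval_add, eval_mul, eval_mul, (isRoot_fiberPoly.2 hy).eq_zero, mul_zero,
    zero_add, map_mul, hχB, hχG, one_mul]

theorem exists_isMDSSelfDual_of_card_eq_sq {s t : ℕ} (hD₁ : 2 * D₁ ∣ r - 1) (hs : s ≤ D₁)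
    (ht : t ≤ D₂) (hpar₁ : Even ((D₂ * m + m) * t)) (hpar₂ : Even (D₂ * m * (t - 1)))
    (hn : Odd (s * f₁ + t * f₂)) :
    ∃ C : Submodule F (Fin (s * f₁ + t * f₂ + 1) → F), IsMDSSelfDual C := by
  have hcard₁ : Fintype.card F = f₁ * (D₁ * g) + 1 := by rw [hcard, ← hM₁, mul_assoc]
  have hcard₂ : Fintype.card F = f₂ * (D₂ * g) + 1 := by rw [hcard, ← hM₂, mul_assoc]
  have hgEven : Even g := even_iff_two_dvd.2 ((by decide : 2 ∣ 4).trans hg)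
  obtain ⟨B, rfl, hB⟩ := exists_finset_card_eq_forall_pow_eq (e := f₁ * g) (c := (1 : F))
    (hcard₁.trans (by ring)) one_ne_zero (one_pow _) hs
  obtain ⟨G, rfl, hG⟩ := exists_finset_card_eq_forall_pow_eq (e := f₂ * g) (c := (-1 : F))
    (hcard₂.trans (by ring)) (neg_ne_zero.2 one_ne_zero) (hgEven.mul_left _).neg_one_pow ht
  set P := fiberPoly f₁ B * fiberPoly f₂ G
  have hmonic₁ : (fiberPoly f₁ B).Monic := monic_fiberPoly (pos_of_card_eq hcard₁)
  have hmonic₂ : (fiberPoly f₂ G).Monic := monic_fiberPoly (pos_of_card_eq hcard₂)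
  have hdeg : P.natDegree = #B * f₁ + #G * f₂ := by
    rw [hmonic₁.natDegree_mul hmonic₂, natDegree_fiberPoly, natDegree_fiberPoly]
  have hsplits : P.Splits :=
    (splits_fiberPoly hcard₁ fun c hc => by rw [pow_mul, hB c hc, one_pow]).mul
      (splits_fiberPoly hcard₂ fun c hc => by rw [pow_mul, hG c hc, hgEven.neg_one_pow])
  have hneg : quadraticChar F (-1) = 1 :=
    quadraticChar_eq_one_of_pow_sq_eq_one hcard hg (by rw [pow_right_comm, neg_one_sq, one_pow])
  rw [← hdeg] at hn ⊢
  refine exists_isMDSSelfDual_of_quadraticChar_derivative_eq_one (hmonic₁.mul hmonic₂) hsplits hn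
    hneg fun x hx => ?_
  rcases root_mul.1 hx with hx | hx
  · exact quadraticChar_eval_derivative_of_pow_left_mem hF hr hcard hg hM₁ hM₂
      (dvd_of_mul_left_dvd hD₁) hB hG hpar₁ (isRoot_fiberPoly.1 hx)
  · exact quadraticChar_eval_derivative_of_pow_right_mem hF hr hcard hg hM₁ hM₂ hD₁ hB hG hpar₂
      (isRoot_fiberPoly.1 hx)

end TwoFamilies

section Divisibility

variable {r e₁ e₂ l m t : ℕ}

lemma div_gcd_dvd_of_dvd_mul {a b c : ℕ} (ha : a ≠ 0) (h : a ∣ b * c) : a / a.gcd b ∣ c := by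
  have hgcd : 0 < a.gcd b := Nat.gcd_pos_of_pos_left b (Nat.pos_of_ne_zero ha)
  refine (Nat.coprime_div_gcd_div_gcd hgcd).dvd_of_dvd_mul_left ?_
  refine Nat.dvd_of_mul_dvd_mul_left hgcd ?_
  rwa [Nat.mul_div_cancel' (Nat.gcd_dvd_left a b), ← mul_assoc,
    Nat.mul_div_cancel' (Nat.gcd_dvd_right a b)]

lemma two_pow_dvd_gcd (he₁ : e₁ % 2 ^ (l + 1) = 2 ^ l) (he₂ : 2 ^ l ∣ e₂) : 2 ^ l ∣ e₁.gcd e₂ :=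
  Nat.dvd_gcd ((Nat.dvd_mod_iff (pow_dvd_pow 2 l.le_succ)).1 he₁.symm.dvd) he₂

lemma odd_div_gcd (he₁ : e₁ % 2 ^ (l + 1) = 2 ^ l) (he₂ : 2 ^ l ∣ e₂) : Odd (e₁ / e₁.gcd e₂) := by
  rw [← Nat.not_even_iff_odd, even_iff_two_dvd]
  intro htwo
  have hdvd' : 2 ^ (l + 1) ∣ e₁ := by
    rw [pow_succ, ← Nat.mul_div_cancel' (Nat.gcd_dvd_left e₁ e₂)]
    exact mul_dvd_mul (two_pow_dvd_gcd he₁ he₂) htwo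
  rw [Nat.mod_eq_zero_of_dvd hdvd'] at he₁
  exact (pow_ne_zero l two_ne_zero) he₁.symm

lemma exists_add_one_eq_two_mul (he₂ : e₂ ≠ 0) (hr : Odd r) (hdvd : 2 * e₂ ∣ e₁ * (r + 1)) :
    ∃ m, r + 1 = 2 * (e₂ / e₁.gcd e₂ * m) := by
  obtain ⟨k, rfl⟩ := hr
  have hdvd' : e₂ ∣ e₁ * (k + 1) :=
    Nat.dvd_of_mul_dvd_mul_left two_pos (hdvd.trans (Dvd.intro_left 1 (by ring)))
  obtain ⟨m, hm⟩ := div_gcd_dvd_of_dvd_mul he₂ hdvd'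
  refine ⟨m, ?_⟩
  rw [Nat.gcd_comm, ← hm]
  ring

lemma two_mul_div_gcd_dvd_sub_one (he₁ : e₁ ≠ 0) (hr : Odd r) (hD₁ : Odd (e₁ / e₁.gcd e₂))
    (hdvd : e₁ ∣ e₂ * (r - 1)) : 2 * (e₁ / e₁.gcd e₂) ∣ r - 1 :=
  (Nat.coprime_two_left.2 hD₁).mul_dvd_of_dvd_of_dvd (Nat.Odd.sub_odd hr odd_one).two_dvd
    (div_gcd_dvd_of_dvd_mul he₁ hdvd)

lemma even_add_mul_of_even_div (he₂ : e₂ ≠ 0) (hD₁ : Odd (e₁ / e₁.gcd e₂))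
    (hr : r + 1 = 2 * (e₂ / e₁.gcd e₂ * m))
    (heven : Even (t * e₁ * (r + 1) / (2 * e₂) + t * (r + 1) / 2)) :
    Even ((e₂ / e₁.gcd e₂ * m + m) * t) := by
  set D₁ := e₁ / e₁.gcd e₂
  set D₂ := e₂ / e₁.gcd e₂
  have hcross : e₁ * D₂ = D₁ * e₂ := by
    rw [← Nat.mul_div_assoc _ (Nat.gcd_dvd_right e₁ e₂), Nat.div_mul_right_comm
      (Nat.gcd_dvd_left e₁ e₂)]
  have hdiv₁ : t * e₁ * (r + 1) / (2 * e₂) = t * (D₁ * m) := by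
    refine Nat.div_eq_of_eq_mul_left (by positivity) ?_
    rw [hr]
    linear_combination 2 * t * m * hcross
  have hdiv₂ : t * (r + 1) / 2 = t * (D₂ * m) := by
    rw [hr, Nat.mul_left_comm, Nat.mul_div_cancel_left _ two_pos]
  rw [hdiv₁, hdiv₂] at heven
  rw [← Nat.not_even_iff_odd] at hD₁
  simp only [Nat.even_mul, Nat.even_add] at heven ⊢
  tauto

end Divisibility

/-- Theorem 3.3(2): if `(r+1)/2·(t·e₁/e₂ + t)` is even, `4 ∣ (t−1)(r+1)` and
`n₁ = s·f₁ + t·f₂` is odd, there is a `q`-ary MDS self-dual code of length `n₁ + 1`,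
where `q = r²`. -/
theorem mds_self_dual_thm3_odd_length_succ
    (r e1 f1 e2 f2 s t l : ℕ)
    (hr_odd : Odd r) (hr_pp : IsPrimePow r)
    (hq1 : r ^ 2 - 1 = e1 * f1) (hq2 : r ^ 2 - 1 = e2 * f2)
    (hl : 2 ≤ l) (he1 : e1 % 2 ^ (l + 1) = 2 ^ l) (he2 : 2 ^ l ∣ e2)
    (hdvd1 : 2 * e2 ∣ e1 * (r + 1)) (hdvd2 : e1 ∣ e2 * (r - 1))
    (hs1 : 1 ≤ s) (hs2 : s ≤ e1 / Nat.gcd e1 e2)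
    (ht1 : 1 ≤ t) (ht2 : t ≤ e2 / Nat.gcd e1 e2)
    (heven : Even (t * e1 * (r + 1) / (2 * e2) + t * (r + 1) / 2))
    (h4 : 4 ∣ (t - 1) * (r + 1))
    (hn1 : Odd (s * f1 + t * f2))
    (F : Type*) [Field F] [Fintype F] [DecidableEq F]
    (hF : Fintype.card F = r ^ 2) :
    ∃ C : Submodule F (Fin (s * f1 + t * f2 + 1) → F),
      dualCode C = C ∧
      Module.finrank F C = (s * f1 + t * f2 + 1) / 2 ∧
      IsMinDist C ((s * f1 + t * f2 + 1) / 2 + 1) := by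
  have hqF : Fintype.card F = r ^ 2 - 1 + 1 := by
    have := Fintype.card_pos (α := F)
    omega
  have he1_ne : e1 ≠ 0 := (pos_of_card_eq (hqF.trans (by rw [hq1]))).ne'
  have he2_ne : e2 ≠ 0 := (pos_of_card_eq (hqF.trans (by rw [hq2]))).ne'
  have hD₁ : Odd (e1 / e1.gcd e2) := odd_div_gcd he1 he2
  have hg : 4 ∣ e1.gcd e2 := (pow_dvd_pow 2 hl).trans (two_pow_dvd_gcd he1 he2)
  obtain ⟨m, hm⟩ := exists_add_one_eq_two_mul he2_ne hr_odd hdvd1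
  have hfactor₁ : f1 * (e1 / e1.gcd e2) * e1.gcd e2 = r ^ 2 - 1 := by
    rw [mul_assoc, Nat.div_mul_cancel (Nat.gcd_dvd_left e1 e2), hq1, mul_comm]
  have hfactor₂ : f2 * (e2 / e1.gcd e2) * e1.gcd e2 = r ^ 2 - 1 := by
    rw [mul_assoc, Nat.div_mul_cancel (Nat.gcd_dvd_right e1 e2), hq2, mul_comm]
  have hM : f2 * (e2 / e1.gcd e2) = f1 * (e1 / e1.gcd e2) :=
    Nat.eq_of_mul_eq_mul_right (Nat.gcd_pos_of_pos_left e2 (Nat.pos_of_ne_zero he1_ne))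
      (hfactor₂.trans hfactor₁.symm)
  have hpar : Even (e2 / e1.gcd e2 * m * (t - 1)) := by
    obtain ⟨j, hj⟩ := h4
    exact ⟨j, by rw [hm] at hj; linarith⟩
  exact exists_isMDSSelfDual_of_card_eq_sq hF hm (by rw [hfactor₁, hqF]) hg rfl hM
    (two_mul_div_gcd_dvd_sub_one he1_ne hr_odd hD₁ hdvd2) hs2 ht2
    (even_add_mul_of_even_div he2_ne hD₁ hm heven) hpar hn1
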